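/- arXiv:2207.05156 — 2 statements merged into one kernel-verified Lean document; each statement's English description precedes it below -/
import Mathlib

section
/- Fix an integer k ≥ 1, a probability mass function π on the nonnegative integers with π_k > 0, and real numbers p_i with 0 < p_i < 1 for all i ≥ k+1. Set s_0(k+1,k+j) = ∏_{i=k+1}^{k+j} (1−p_i) and s_1(k+1,k+j) = s_0(k+1,k+j) · ∑_{i=k+1}^{k+j} p_i/(1−p_i), and for t ∈ (0,1] define S_0(t,k) = (∑_{j≥0} π_{k+j} C(k+j,k)(1−t)^j s_0(k+1,k+j)) / (∑_{j≥0} π_{k+j} C(k+j,k)(1−t)^j) and S_1(t,k) = (∑_{j≥1} π_{k+j} C(k+j,k)(1−t)^j s_1(k+1,k+j)) / (∑_{j≥0} π_{k+j} C(k+j,k)(1−t)^j). Then there exists a_k ∈ [0,1) such that for all t ∈ (0,1], sgn(S_0(t,k) − S_1(t,k)) = sgn(t − a_k). -/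
/-- `s₀(k+1, k+j)`: the probability of zero successes among trials `k+1, …, k+j`. -/
noncomputable def s0 (p : ℕ → ℝ) (k j : ℕ) : ℝ :=
  ∏ i ∈ Finset.Ico (k + 1) (k + j + 1), (1 - p i)

/-- `s₁(k+1, k+j)`: the probability of exactly one success among trials `k+1, …, k+j`.
Note `s₁(k+1, k) = 0`, so the `j = 0` term vanishes. -/
noncomputable def s1 (p : ℕ → ℝ) (k j : ℕ) : ℝ :=
  s0 p k j * ∑ i ∈ Finset.Ico (k + 1) (k + j + 1), p i / (1 - p i)

/-- `S₀(t,k)`: conditional probability of zero successes after time `t` given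
`k` trials on `[0,t]`. -/
noncomputable def S0 (pi : ℕ → ℝ) (p : ℕ → ℝ) (k : ℕ) (t : ℝ) : ℝ :=
  (∑' j : ℕ, pi (k + j) * ((k + j).choose k : ℝ) * (1 - t) ^ j * s0 p k j) /
    (∑' j : ℕ, pi (k + j) * ((k + j).choose k : ℝ) * (1 - t) ^ j)

/-- `S₁(t,k)`: conditional probability of exactly one success after time `t` given
`k` trials on `[0,t]` (the `j = 0` summand is zero since `s₁(k+1,k) = 0`). -/
noncomputable def S1 (pi : ℕ → ℝ) (p : ℕ → ℝ) (k : ℕ) (t : ℝ) : ℝ :=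
  (∑' j : ℕ, pi (k + j) * ((k + j).choose k : ℝ) * (1 - t) ^ j * s1 p k j) /
    (∑' j : ℕ, pi (k + j) * ((k + j).choose k : ℝ) * (1 - t) ^ j)

/-!
Up to a positive factor, `S₀(t,k) − S₁(t,k)` is a power series in `x = 1 − t` whose `j`-th
coefficient has the sign of `1 - ∑ p_i / (1 - p_i)`, the sum running over `k + 1 ≤ i ≤ k + j`, or
vanishes. These signs change at most once, from `+` to `-`. If they change at the index `m`,
comparing `x ^ m * f y` with `y ^ m * f x` term by term shows that such a series `f`, once
nonpositive, is negative from there on (Descartes' rule of signs), so by continuity it has at most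
one sign change on `[0, 1)`.
-/

open Set

section SingleCrossing

theorem sign_div_of_pos (a : ℝ) {b : ℝ} (hb : 0 < b) : Real.sign (a / b) = Real.sign a := by
  rcases lt_trichotomy a 0 with ha | rfl | ha
  · rw [Real.sign_of_neg ha, Real.sign_of_neg (div_neg_of_neg_of_pos ha hb)]
  · rw [zero_div]
  · rw [Real.sign_of_pos ha, Real.sign_of_pos (div_pos ha hb)]

theorem exists_sign_eq_sign_sub_of_single_crossing {f : ℝ → ℝ} {l u : ℝ} (hlu : l < u)
    (hf : ContinuousOn f (Ico l u)) (hl : 0 < f l)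
    (hcross : ∀ x ∈ Ico l u, ∀ y ∈ Ico l u, x < y → f x ≤ 0 → f y < 0) :
    ∃ b ∈ Ioc l u, ∀ x ∈ Ico l u, Real.sign (f x) = Real.sign (b - x) := by
  by_cases hpos : ∀ x ∈ Ico l u, 0 < f x
  · refine ⟨u, right_mem_Ioc.2 hlu, fun x hx => ?_⟩
    rw [Real.sign_of_pos (hpos x hx), Real.sign_of_pos (sub_pos.2 hx.2)]
  push Not at hpos
  obtain ⟨z, hz, hfz⟩ := hpos
  obtain ⟨b, hb, hfb⟩ : ∃ b ∈ Icc l z, f b = 0 :=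
    intermediate_value_Icc' hz.1 (hf.mono (Icc_subset_Ico_right hz.2)) ⟨hfz, hl.le⟩
  have hb_mem : b ∈ Ico l u := ⟨hb.1, hb.2.trans_lt hz.2⟩
  have hlb : l < b := hb.1.lt_of_ne (by rintro rfl; exact hl.ne' hfb)
  refine ⟨b, ⟨hlb, hb_mem.2.le⟩, fun x hx => ?_⟩
  rcases lt_trichotomy x b with hxb | rfl | hbx
  · have hfx : 0 < f x := not_le.1 fun h => (hcross x hx b hb_mem hxb h).ne hfb
    rw [Real.sign_of_pos hfx, Real.sign_of_pos (sub_pos.2 hxb)]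
  · rw [hfb, sub_self]
  · rw [Real.sign_of_neg (hcross b hb_mem x hx hbx hfb.le), Real.sign_of_neg (sub_neg.2 hbx)]

end SingleCrossing

section PowerSeries

variable {d : ℕ → ℝ} {R : ℝ}

theorem continuousOn_tsum_mul_pow (hd : ∀ x ∈ Ico 0 R, Summable fun j => d j * x ^ j) :
    ContinuousOn (fun x => ∑' j, d j * x ^ j) (Ico 0 R) := by
  intro x hx
  obtain ⟨z, hxz, hzR⟩ := exists_between hx.2
  have hIcc : ContinuousOn (fun x => ∑' j, d j * x ^ j) (Icc 0 z) := by
    refine continuousOn_tsum (fun j => by fun_prop) (hd z ⟨hx.1.trans hxz.le, hzR⟩).norm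
      fun j y hy => ?_
    rw [norm_mul, norm_mul, norm_pow, norm_pow, Real.norm_of_nonneg hy.1,
      Real.norm_of_nonneg (hy.1.trans hy.2)]
    gcongr
    exacts [hy.1, hy.2]
  refine (hIcc x ⟨hx.1, hxz.le⟩).mono_of_mem_nhdsWithin ?_
  filter_upwards [self_mem_nhdsWithin, mem_nhdsWithin_of_mem_nhds (Iio_mem_nhds hxz)] with y hy hyz
  exact ⟨hy.1, le_of_lt hyz⟩

theorem pow_mul_pow_le_pow_mul_pow_of_le {S : Type*} [CommSemiring S] [PartialOrder S]
    [IsOrderedRing S] {x y : S} (hx : 0 ≤ x) (hxy : x ≤ y) {j m : ℕ} (hjm : j ≤ m) :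
    x ^ m * y ^ j ≤ y ^ m * x ^ j := by
  obtain ⟨n, rfl⟩ := Nat.exists_eq_add_of_le hjm
  have hy : 0 ≤ y := hx.trans hxy
  calc x ^ (j + n) * y ^ j = x ^ j * y ^ j * x ^ n := by ring
    _ ≤ x ^ j * y ^ j * y ^ n := by gcongr
    _ = y ^ (j + n) * x ^ j := by ring

theorem exists_coeff_neg_of_tsum_mul_pow_nonpos {x : ℝ} (hx : 0 ≤ x)
    (hd : Summable fun j => d j * x ^ j) (hd0 : 0 < d 0) (hfx : ∑' j, d j * x ^ j ≤ 0) :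
    ∃ j, d j < 0 := by
  by_contra! hnonneg
  exact hfx.not_gt (hd.tsum_pos (fun j => mul_nonneg (hnonneg j) (pow_nonneg hx j)) 0 (by simpa))

theorem tsum_mul_pow_neg_of_lt_of_nonpos {x y : ℝ} (hx : 0 ≤ x) (hxy : x < y)
    (hdx : Summable fun j => d j * x ^ j) (hdy : Summable fun j => d j * y ^ j)
    (hd0 : 0 < d 0) (hsign : ∀ i j, i ≤ j → d i < 0 → d j ≤ 0)
    (hfx : ∑' j, d j * x ^ j ≤ 0) : ∑' j, d j * y ^ j < 0 := by
  classical
  have hneg : ∃ j, d j < 0 := exists_coeff_neg_of_tsum_mul_pow_nonpos hx hdx hd0 hfx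
  set m := Nat.find hneg
  have hm : m ≠ 0 := fun h => hd0.not_gt (h ▸ Nat.find_spec hneg)
  have hterm (j : ℕ) : x ^ m * (d j * y ^ j) ≤ y ^ m * (d j * x ^ j) := by
    rw [mul_left_comm, mul_left_comm (y ^ m)]
    rcases lt_or_ge j m with hjm | hmj
    · exact mul_le_mul_of_nonneg_left (pow_mul_pow_le_pow_mul_pow_of_le hx hxy.le hjm.le)
        (not_lt.1 (Nat.find_min hneg hjm))
    · refine mul_le_mul_of_nonpos_left ?_ (hsign m j hmj (Nat.find_spec hneg))
      rw [mul_comm (y ^ m), mul_comm (x ^ m)]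
      exact pow_mul_pow_le_pow_mul_pow_of_le hx hxy.le hmj
  have hterm_zero : x ^ m * (d 0 * y ^ 0) < y ^ m * (d 0 * x ^ 0) := by
    simpa [hd0] using pow_lt_pow_left₀ hxy hx hm
  have hlt : x ^ m * ∑' j, d j * y ^ j < 0 :=
    calc x ^ m * ∑' j, d j * y ^ j = ∑' j, x ^ m * (d j * y ^ j) := tsum_mul_left.symm
      _ < ∑' j, y ^ m * (d j * x ^ j) :=
        Summable.tsum_lt_tsum hterm hterm_zero (hdy.mul_left _) (hdx.mul_left _)
      _ = y ^ m * ∑' j, d j * x ^ j := tsum_mul_left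
      _ ≤ 0 := mul_nonpos_of_nonneg_of_nonpos (pow_nonneg (hx.trans hxy.le) m) hfx
  exact neg_of_mul_neg_right hlt (pow_nonneg hx m)

theorem exists_sign_tsum_mul_pow_eq_sign_sub (hR : 0 < R)
    (hd : ∀ x ∈ Ico 0 R, Summable fun j => d j * x ^ j) (hd0 : 0 < d 0)
    (hsign : ∀ i j, i ≤ j → d i < 0 → d j ≤ 0) :
    ∃ b ∈ Ioc 0 R, ∀ x ∈ Ico 0 R, Real.sign (∑' j, d j * x ^ j) = Real.sign (b - x) := by
  have hf0 : ∑' j, d j * (0 : ℝ) ^ j = d 0 := by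
    rw [tsum_eq_single 0 fun j hj => by simp [hj], pow_zero, mul_one]
  exact exists_sign_eq_sign_sub_of_single_crossing hR (continuousOn_tsum_mul_pow hd)
    (hf0.symm ▸ hd0) fun x hx y hy hxy =>
      tsum_mul_pow_neg_of_lt_of_nonpos hx.1 hxy (hd x hx) (hd y hy) hd0 hsign

end PowerSeries

section SuccessProbabilities

variable {p : ℕ → ℝ} {k : ℕ}

theorem s0_zero (p : ℕ → ℝ) (k : ℕ) : s0 p k 0 = 1 := by simp [s0]

theorem s1_zero (p : ℕ → ℝ) (k : ℕ) : s1 p k 0 = 0 := by simp [s1]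

theorem s0_succ (p : ℕ → ℝ) (k j : ℕ) : s0 p k (j + 1) = s0 p k j * (1 - p (k + j + 1)) :=
  Finset.prod_Ico_succ_top (by omega) _

theorem s1_succ {j : ℕ} (hp : p (k + j + 1) ≠ 1) :
    s1 p k (j + 1) = s1 p k j * (1 - p (k + j + 1)) + s0 p k j * p (k + j + 1) := by
  have hq : 1 - p (k + j + 1) ≠ 0 := sub_ne_zero.2 hp.symm
  rw [s1, s1, s0_succ, ← add_assoc, Finset.sum_Ico_succ_top (by omega)]
  field_simp

theorem s0_pos (hp : ∀ i, k + 1 ≤ i → p i < 1) (j : ℕ) : 0 < s0 p k j :=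
  Finset.prod_pos fun i hi => sub_pos.2 (hp i (Finset.mem_Ico.1 hi).1)

theorem s0_le_s1_iff (hp : ∀ i, k + 1 ≤ i → p i < 1) (j : ℕ) :
    s0 p k j ≤ s1 p k j ↔ 1 ≤ ∑ i ∈ Finset.Ico (k + 1) (k + j + 1), p i / (1 - p i) :=
  le_mul_iff_one_le_right (s0_pos hp j)

theorem odds_nonneg {q : ℝ} (hq : 0 ≤ q ∧ q < 1) : 0 ≤ q / (1 - q) :=
  div_nonneg hq.1 (sub_nonneg.2 hq.2.le)

theorem s0_le_s1_of_le (hp : ∀ i, k + 1 ≤ i → 0 ≤ p i ∧ p i < 1) {i j : ℕ} (hij : i ≤ j)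
    (h : s0 p k i ≤ s1 p k i) : s0 p k j ≤ s1 p k j := by
  have hp_lt : ∀ l, k + 1 ≤ l → p l < 1 := fun l hl => (hp l hl).2
  rw [s0_le_s1_iff hp_lt] at h ⊢
  exact h.trans (Finset.sum_le_sum_of_subset_of_nonneg (Finset.Ico_subset_Ico_right (by omega))
    fun l hl _ => odds_nonneg (hp l (Finset.mem_Ico.1 hl).1))

theorem s1_nonneg (hp : ∀ i, k + 1 ≤ i → 0 ≤ p i ∧ p i < 1) (j : ℕ) : 0 ≤ s1 p k j :=
  mul_nonneg (s0_pos (fun i hi => (hp i hi).2) j).le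
    (Finset.sum_nonneg fun i hi => odds_nonneg (hp i (Finset.mem_Ico.1 hi).1))

theorem s0_add_s1_le_one (hp : ∀ i, k + 1 ≤ i → 0 ≤ p i ∧ p i < 1) (j : ℕ) :
    s0 p k j + s1 p k j ≤ 1 := by
  induction j with
  | zero => simp [s0_zero, s1_zero]
  | succ j ih =>
    obtain ⟨hp0, hp1⟩ := hp (k + j + 1) (by omega)
    calc s0 p k (j + 1) + s1 p k (j + 1)
        = s0 p k j + s1 p k j - s1 p k j * p (k + j + 1) := by
          rw [s0_succ, s1_succ hp1.ne]; ring
      _ ≤ s0 p k j + s1 p k j := sub_le_self _ (mul_nonneg (s1_nonneg hp j) hp0)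
      _ ≤ 1 := ih

theorem abs_s0_le_one (hp : ∀ i, k + 1 ≤ i → 0 ≤ p i ∧ p i < 1) (j : ℕ) : |s0 p k j| ≤ 1 := by
  rw [abs_of_pos (s0_pos (fun i hi => (hp i hi).2) j)]
  linarith [s1_nonneg hp j, s0_add_s1_le_one hp j]

theorem abs_s1_le_one (hp : ∀ i, k + 1 ≤ i → 0 ≤ p i ∧ p i < 1) (j : ℕ) : |s1 p k j| ≤ 1 := by
  rw [abs_of_nonneg (s1_nonneg hp j)]
  linarith [s0_pos (fun i hi => (hp i hi).2) j, s0_add_s1_le_one hp j]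

end SuccessProbabilities

section Posterior

/-- The factor of the unnormalised conditional probability of `j` trials after time `t`, given `k`
trials on `[0, t]`, that does not depend on `t`; the full expression is
`posteriorWeight pi k j * (1 - t) ^ j`. -/
noncomputable def posteriorWeight (pi : ℕ → ℝ) (k j : ℕ) : ℝ :=
  pi (k + j) * ((k + j).choose k : ℝ)

variable {pi p : ℕ → ℝ} {k : ℕ} {x t : ℝ}

theorem posteriorWeight_zero (pi : ℕ → ℝ) (k : ℕ) : posteriorWeight pi k 0 = pi k := by
  simp [posteriorWeight]

theorem posteriorWeight_nonneg (hpi : ∀ n, 0 ≤ pi n) (k j : ℕ) : 0 ≤ posteriorWeight pi k j :=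
  mul_nonneg (hpi _) (Nat.cast_nonneg _)

theorem summable_posteriorWeight_mul_pow {C : ℝ} (hpi : ∀ n, |pi n| ≤ C) (k : ℕ) (hx : |x| < 1) :
    Summable fun j => posteriorWeight pi k j * x ^ j := by
  have hgeom : Summable fun j => ((j + k).choose k : ℝ) * x ^ j :=
    summable_choose_mul_geometric_of_norm_lt_one k hx
  refine Summable.of_norm_bounded (hgeom.norm.mul_left C) fun j => ?_
  rw [posteriorWeight, mul_assoc, norm_mul, add_comm k j]
  exact mul_le_mul_of_nonneg_right (hpi _) (norm_nonneg _)

theorem summable_mul_of_abs_le_one {ι : Type*} {f w : ι → ℝ} (hf : Summable f)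
    (hw : ∀ j, |w j| ≤ 1) : Summable fun j => f j * w j :=
  Summable.of_norm_bounded hf.norm fun j => by
    rw [norm_mul]
    exact mul_le_of_le_one_right (norm_nonneg _) (hw j)

theorem tsum_posteriorWeight_mul_pow_pos (hpi : ∀ n, 0 ≤ pi n) (hpik : 0 < pi k) (hx : 0 ≤ x)
    (hsum : Summable fun j => posteriorWeight pi k j * x ^ j) :
    0 < ∑' j, posteriorWeight pi k j * x ^ j :=
  hsum.tsum_pos (fun j => mul_nonneg (posteriorWeight_nonneg hpi k j) (pow_nonneg hx j)) 0
    (by simpa [posteriorWeight_zero])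

theorem summable_posteriorWeight_mul_s0_sub_s1_mul_pow
    (hp : ∀ i, k + 1 ≤ i → 0 ≤ p i ∧ p i < 1)
    (hsum : Summable fun j => posteriorWeight pi k j * x ^ j) :
    Summable fun j => posteriorWeight pi k j * (s0 p k j - s1 p k j) * x ^ j :=
  ((summable_mul_of_abs_le_one hsum (abs_s0_le_one hp)).sub
    (summable_mul_of_abs_le_one hsum (abs_s1_le_one hp))).congr fun j => by ring

theorem S0_sub_S1_eq_div (hp : ∀ i, k + 1 ≤ i → 0 ≤ p i ∧ p i < 1)
    (hsum : Summable fun j => posteriorWeight pi k j * (1 - t) ^ j) :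
    S0 pi p k t - S1 pi p k t =
      (∑' j, posteriorWeight pi k j * (s0 p k j - s1 p k j) * (1 - t) ^ j) /
        ∑' j, posteriorWeight pi k j * (1 - t) ^ j := by
  change (∑' j, posteriorWeight pi k j * (1 - t) ^ j * s0 p k j) / _ -
    (∑' j, posteriorWeight pi k j * (1 - t) ^ j * s1 p k j) / _ = _
  rw [← sub_div, ← (summable_mul_of_abs_le_one hsum (abs_s0_le_one hp)).tsum_sub
    (summable_mul_of_abs_le_one hsum (abs_s1_le_one hp))]
  congr 1
  exact tsum_congr fun j => by ring

theorem posteriorWeight_mul_s0_sub_s1_nonpos_of_le (hpi : ∀ n, 0 ≤ pi n)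
    (hp : ∀ i, k + 1 ≤ i → 0 ≤ p i ∧ p i < 1) {i j : ℕ} (hij : i ≤ j)
    (hi : posteriorWeight pi k i * (s0 p k i - s1 p k i) < 0) :
    posteriorWeight pi k j * (s0 p k j - s1 p k j) ≤ 0 := by
  have hsub : s0 p k i - s1 p k i < 0 := neg_of_mul_neg_right hi (posteriorWeight_nonneg hpi k i)
  exact mul_nonpos_of_nonneg_of_nonpos (posteriorWeight_nonneg hpi k j)
    (sub_nonpos.2 (s0_le_s1_of_le hp hij (sub_neg.1 hsub).le))

end Posterior

theorem stmt4_general (k : ℕ) (pi : ℕ → ℝ) (hpi : ∀ n, 0 ≤ pi n)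
    (hsum : ∀ x ∈ Ico (0 : ℝ) 1, Summable fun j => posteriorWeight pi k j * x ^ j)
    (hpik : 0 < pi k) (p : ℕ → ℝ) (hp : ∀ i, k + 1 ≤ i → 0 ≤ p i ∧ p i < 1) :
    ∃ a ∈ Ico (0 : ℝ) 1, ∀ t ∈ Ioc (0 : ℝ) 1,
      Real.sign (S0 pi p k t - S1 pi p k t) = Real.sign (t - a) := by
  obtain ⟨b, ⟨hb0, hb1⟩, hb⟩ := exists_sign_tsum_mul_pow_eq_sign_sub one_pos
    (fun x hx => summable_posteriorWeight_mul_s0_sub_s1_mul_pow hp (hsum x hx))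
    (by simpa [posteriorWeight_zero, s0_zero, s1_zero] using hpik)
    (fun i j hij => posteriorWeight_mul_s0_sub_s1_nonpos_of_le hpi hp hij)
  refine ⟨1 - b, ⟨sub_nonneg.2 hb1, sub_lt_self 1 hb0⟩, fun t ⟨ht0, ht1⟩ => ?_⟩
  have hx : 1 - t ∈ Ico (0 : ℝ) 1 := ⟨sub_nonneg.2 ht1, sub_lt_self 1 ht0⟩
  rw [S0_sub_S1_eq_div hp (hsum _ hx),
    sign_div_of_pos _ (tsum_posteriorWeight_mul_pow_pos hpi hpik hx.1 (hsum _ hx)), hb _ hx]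
  congr 1
  ring

/-- There is a cutoff `a_k ∈ [0,1)` such that
`sgn(S₀(t,k) − S₁(t,k)) = sgn(t − a_k)` for all `t ∈ (0,1]`. -/
theorem stmt4 (k : ℕ) (hk : 1 ≤ k) (pi : ℕ → ℝ)
    (hpi0 : ∀ n, 0 ≤ pi n) (hpi1 : HasSum pi 1) (hpik : 0 < pi k)
    (p : ℕ → ℝ) (hp : ∀ i : ℕ, k + 1 ≤ i → 0 < p i ∧ p i < 1) :
    ∃ a ∈ Set.Ico (0 : ℝ) 1, ∀ t ∈ Set.Ioc (0 : ℝ) 1,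
      Real.sign (S0 pi p k t - S1 pi p k t) = Real.sign (t - a) := by
  have hpi_le (n : ℕ) : |pi n| ≤ 1 :=
    (abs_of_nonneg (hpi0 n)).trans_le (le_hasSum hpi1 n fun j _ => hpi0 j)
  exact stmt4_general k pi hpi0
    (fun x hx => summable_posteriorWeight_mul_pow hpi_le k ((abs_of_nonneg hx.1).trans_lt hx.2))
    hpik p fun i hi => ⟨(hp i hi).1.le, (hp i hi).2⟩
end

section
/- Let θ > 0, ν > 0 and x ∈ (0,1). Then lim_{k→∞} D_a log F(θ, θ−ν, θ+k, x) = 0, where D_a log F(θ, θ−ν, θ+k, x) denotes the derivative at a = θ of the function a ↦ log F(a, θ−ν, θ+k, x) and the limit is over positive integers k. -/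
open Filter

/-- The rising factorial (Pochhammer symbol): `(y)_j = y(y+1)⋯(y+j-1)`, `(y)_0 = 1`. -/
noncomputable def risingFactorial (y : ℝ) : ℕ → ℝ
  | 0 => 1
  | m + 1 => risingFactorial y m * (y + m)

/-- The Gaussian hypergeometric function
`F(a,b,c,x) = ∑_{j≥0} (a)_j (b)_j / ((c)_j j!) xʲ`. -/
noncomputable def hypF (a b c x : ℝ) : ℝ :=
  ∑' j : ℕ, risingFactorial a j * risingFactorial b j /
    (risingFactorial c j * (Nat.factorial j : ℝ)) * x ^ j

/-!
For `|a| ≤ c` one has `|d/da (a)_j| ≤ j (c)_j / c`, so dividing by `(c)_j` cancels the dependence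
on `c` except for a factor `1 / c`. Hence the series of `a`-derivatives is dominated by
`c⁻¹ ∑ j |(b)_j| / j! |x|ʲ`, which gives `∂F/∂a = O(1 / c)`. Since `F(0, b, c, x) = 1`, the mean
value inequality gives `F → 1`, and so the logarithmic derivative tends to `0 / 1`.
-/

open Topology

@[simp]
lemma risingFactorial_zero (y : ℝ) : risingFactorial y 0 = 1 := rfl

lemma risingFactorial_succ (y : ℝ) (j : ℕ) :
    risingFactorial y (j + 1) = risingFactorial y j * (y + j) := rfl

lemma risingFactorial_zero_left {j : ℕ} (hj : j ≠ 0) : risingFactorial 0 j = 0 := by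
  induction j with
  | zero => exact absurd rfl hj
  | succ m ih =>
    rcases eq_or_ne m 0 with rfl | hm
    · simp [risingFactorial_succ]
    · rw [risingFactorial_succ, ih hm, zero_mul]

lemma risingFactorial_pos {y : ℝ} (hy : 0 < y) (j : ℕ) : 0 < risingFactorial y j := by
  induction j with
  | zero => exact one_pos
  | succ m ih => rw [risingFactorial_succ]; positivity

lemma abs_add_natCast_le {a c : ℝ} (h : |a| ≤ c) (j : ℕ) : |a + j| ≤ c + j :=
  (abs_add_le a j).trans (by rw [Nat.abs_cast]; gcongr)

lemma abs_risingFactorial_le {a c : ℝ} (h : |a| ≤ c) (j : ℕ) :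
    |risingFactorial a j| ≤ risingFactorial c j := by
  induction j with
  | zero => simp
  | succ m ih =>
    rw [risingFactorial_succ, risingFactorial_succ, abs_mul]
    exact mul_le_mul ih (abs_add_natCast_le h m) (abs_nonneg _) ((abs_nonneg _).trans ih)

lemma differentiable_risingFactorial (j : ℕ) :
    Differentiable ℝ (fun a => risingFactorial a j) := by
  induction j with
  | zero => exact differentiable_const 1
  | succ m ih => exact ih.mul (differentiable_id.add_const _)

lemma deriv_risingFactorial_succ (a : ℝ) (j : ℕ) :
    deriv (fun a => risingFactorial a (j + 1)) a =
      deriv (fun a => risingFactorial a j) a * (a + j) + risingFactorial a j := by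
  have h : HasDerivAt (fun a => risingFactorial a (j + 1))
      (deriv (fun a => risingFactorial a j) a * (a + j) + risingFactorial a j * 1) a :=
    (differentiable_risingFactorial j a).hasDerivAt.mul ((hasDerivAt_id a).add_const (j : ℝ))
  rw [h.deriv, mul_one]

lemma mul_abs_deriv_risingFactorial_le {a c : ℝ} (h : |a| ≤ c) (j : ℕ) :
    c * |deriv (fun a => risingFactorial a j) a| ≤ j * risingFactorial c j := by
  have hc : 0 ≤ c := (abs_nonneg a).trans h
  induction j with
  | zero => simp
  | succ m ih =>
    have hpos : 0 ≤ risingFactorial c m := (abs_nonneg _).trans (abs_risingFactorial_le h m)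
    rw [deriv_risingFactorial_succ]
    calc c * |deriv (fun a => risingFactorial a m) a * (a + m) + risingFactorial a m|
        ≤ c * (|deriv (fun a => risingFactorial a m) a| * |a + m| + |risingFactorial a m|) := by
          rw [← abs_mul]
          gcongr
          exact abs_add_le _ _
      _ = c * |deriv (fun a => risingFactorial a m) a| * |a + m| + c * |risingFactorial a m| := by
          ring
      _ ≤ m * risingFactorial c m * (c + m) + (c + m) * risingFactorial c m := by
          gcongr
          · exact abs_add_natCast_le h m
          · exact le_add_of_nonneg_right m.cast_nonneg
          · exact abs_risingFactorial_le h m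
      _ = (m + 1 : ℕ) * risingFactorial c (m + 1) := by
          rw [risingFactorial_succ]
          push_cast
          ring

section Derivative

variable {a c x : ℝ}

/-- The `j`-th term of the series `hypF a b c x`. -/
noncomputable def hypTerm (a b c x : ℝ) (j : ℕ) : ℝ :=
  risingFactorial a j * risingFactorial b j / (risingFactorial c j * j.factorial) * x ^ j

/-- The derivative of `hypTerm a b c x j` in the variable `a`. -/
noncomputable def hypDerivTerm (a b c x : ℝ) (j : ℕ) : ℝ :=
  deriv (fun a => risingFactorial a j) a * risingFactorial b j /
    (risingFactorial c j * j.factorial) * x ^ j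

/-- The sequence `j (b)_j / j! xʲ`: its absolute values, divided by `c`, bound
`hypDerivTerm a b c x` uniformly in `|a| ≤ c`. -/
noncomputable def hypMajorant (b x : ℝ) (j : ℕ) : ℝ :=
  j * risingFactorial b j / j.factorial * x ^ j

lemma hypF_eq_tsum_hypTerm (a b c x : ℝ) : hypF a b c x = ∑' j, hypTerm a b c x j := rfl

lemma hasDerivAt_hypTerm (a b c x : ℝ) (j : ℕ) :
    HasDerivAt (fun a => hypTerm a b c x j) (hypDerivTerm a b c x j) a :=
  (((differentiable_risingFactorial j a).hasDerivAt.mul_const _).div_const _).mul_const _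

lemma hypMajorant_succ (b x : ℝ) {j : ℕ} (hj : j ≠ 0) :
    hypMajorant b x (j + 1) = (b / j + 1) * x * hypMajorant b x j := by
  unfold hypMajorant
  rw [risingFactorial_succ, Nat.factorial_succ, pow_succ]
  push_cast
  field_simp

lemma summable_abs_hypMajorant (b : ℝ) (hx : |x| < 1) :
    Summable fun j => |hypMajorant b x j| := by
  obtain ⟨r, hxr, hr⟩ := exists_between hx
  have hratio : Tendsto (fun j : ℕ => |(b / j + 1) * x|) atTop (𝓝 |x|) := by
    simpa using (((tendsto_const_div_atTop_nhds_zero_nat b).add_const 1).mul_const x).abs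
  refine summable_of_ratio_norm_eventually_le hr ?_
  filter_upwards [hratio.eventually_le_const hxr, eventually_ne_atTop 0] with j hle hj
  simp only [Real.norm_eq_abs, abs_abs]
  rw [hypMajorant_succ b x hj, abs_mul]
  gcongr

lemma abs_hypDerivTerm_le (b x : ℝ) (hc : 0 < c) (ha : |a| ≤ c) (j : ℕ) :
    |hypDerivTerm a b c x j| ≤ |hypMajorant b x j| / c := by
  have hcj : 0 < risingFactorial c j := risingFactorial_pos hc j
  have hquot : |deriv (fun a => risingFactorial a j) a| / risingFactorial c j ≤ j / c := by
    rw [div_le_div_iff₀ hcj hc, mul_comm]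
    exact mul_abs_deriv_risingFactorial_le ha j
  calc |hypDerivTerm a b c x j|
      = |deriv (fun a => risingFactorial a j) a| / risingFactorial c j *
          (|risingFactorial b j| / j.factorial * |x| ^ j) := by
        simp only [hypDerivTerm, abs_mul, abs_div, abs_pow, abs_of_pos hcj, Nat.abs_cast]
        field_simp
    _ ≤ j / c * (|risingFactorial b j| / j.factorial * |x| ^ j) := by gcongr
    _ = |hypMajorant b x j| / c := by
        simp only [hypMajorant, abs_mul, abs_div, abs_pow, Nat.abs_cast]
        ring

lemma hasSum_hypTerm_zero_left (b c x : ℝ) : HasSum (hypTerm 0 b c x) 1 := by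
  have hsum : HasSum (hypTerm 0 b c x) (hypTerm 0 b c x 0) :=
    hasSum_single 0 fun j hj => by simp [hypTerm, risingFactorial_zero_left hj]
  simpa [hypTerm] using hsum

lemma hypF_zero_left (b c x : ℝ) : hypF 0 b c x = 1 :=
  (hasSum_hypTerm_zero_left b c x).tsum_eq

lemma hasDerivAt_hypF (b : ℝ) (hx : |x| < 1) (ha : |a| < c) :
    HasDerivAt (fun a => hypF a b c x) (∑' j, hypDerivTerm a b c x j) a := by
  have hc : 0 < c := (abs_nonneg a).trans_lt ha
  simp only [hypF_eq_tsum_hypTerm]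
  exact hasDerivAt_tsum_of_isPreconnected ((summable_abs_hypMajorant b hx).div_const c)
    Metric.isOpen_ball (convex_ball (0 : ℝ) c).isPreconnected
    (fun j y _ => hasDerivAt_hypTerm y b c x j)
    (fun j y hy => abs_hypDerivTerm_le b x hc (mem_ball_zero_iff.1 hy).le j)
    (Metric.mem_ball_self hc) (hasSum_hypTerm_zero_left b c x).summable (mem_ball_zero_iff.2 ha)

lemma abs_deriv_hypF_le (b : ℝ) (hx : |x| < 1) (ha : |a| < c) :
    |deriv (fun a => hypF a b c x) a| ≤ (∑' j, |hypMajorant b x j|) / c := by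
  have hc : 0 < c := (abs_nonneg a).trans_lt ha
  rw [(hasDerivAt_hypF b hx ha).deriv, ← Real.norm_eq_abs]
  exact tsum_of_norm_bounded ((summable_abs_hypMajorant b hx).hasSum.div_const c)
    (abs_hypDerivTerm_le b x hc ha.le)

lemma abs_hypF_sub_one_le (b : ℝ) (hx : |x| < 1) (ha : |a| < c) :
    |hypF a b c x - 1| ≤ (∑' j, |hypMajorant b x j|) / c * |a| := by
  have hmvt := (convex_ball (0 : ℝ) c).norm_image_sub_le_of_norm_deriv_le
    (fun y hy => (hasDerivAt_hypF b hx (mem_ball_zero_iff.1 hy)).differentiableAt)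
    (fun y hy => abs_deriv_hypF_le b hx (mem_ball_zero_iff.1 hy))
    (Metric.mem_ball_self ((abs_nonneg a).trans_lt ha)) (mem_ball_zero_iff.2 ha)
  simpa only [hypF_zero_left, sub_zero, Real.norm_eq_abs] using hmvt

end Derivative

lemma tendsto_deriv_hypF_atTop (a b : ℝ) {x : ℝ} (hx : |x| < 1) :
    Tendsto (fun c => deriv (fun a => hypF a b c x) a) atTop (𝓝 0) :=
  squeeze_zero_norm'
    ((eventually_gt_atTop |a|).mono fun _ hc => abs_deriv_hypF_le b hx hc)
    (tendsto_id.const_div_atTop _)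

lemma tendsto_hypF_atTop (a b : ℝ) {x : ℝ} (hx : |x| < 1) :
    Tendsto (fun c => hypF a b c x) atTop (𝓝 1) := by
  rw [tendsto_iff_norm_sub_tendsto_zero]
  refine squeeze_zero' (.of_forall fun _ => norm_nonneg _)
    ((eventually_gt_atTop |a|).mono fun _ hc => abs_hypF_sub_one_le b hx hc) ?_
  simpa using (tendsto_id.const_div_atTop (∑' j, |hypMajorant b x j|)).mul_const |a|

theorem stmt10_general (a b : ℝ) {x : ℝ} (hx : |x| < 1) :
    Tendsto (fun c => deriv (fun a => Real.log (hypF a b c x)) a) atTop (𝓝 0) := by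
  have hF : Tendsto (fun c => hypF a b c x) atTop (𝓝 1) := tendsto_hypF_atTop a b hx
  have hquot := (tendsto_deriv_hypF_atTop a b hx).div hF one_ne_zero
  rw [zero_div] at hquot
  refine hquot.congr' ?_
  filter_upwards [eventually_gt_atTop |a|, hF.eventually_ne one_ne_zero] with c hc hne
  exact (deriv.log (hasDerivAt_hypF b hx hc).differentiableAt hne).symm

/-- `lim_{k→∞} D_a log F(θ, θ-ν, θ+k, x) = 0`, the derivative being taken at
`a = θ` of `a ↦ log F(a, θ-ν, θ+k, x)`. -/
theorem stmt10 (θ ν x : ℝ) (hθ : 0 < θ) (hν : 0 < ν)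
    (hx : x ∈ Set.Ioo (0 : ℝ) 1) :
    Tendsto
      (fun k : ℕ =>
        deriv (fun a : ℝ => Real.log (hypF a (θ - ν) (θ + (k : ℝ)) x)) θ)
      atTop (nhds 0) := by
  have hx' : |x| < 1 := abs_lt.2 ⟨by linarith [hx.1], hx.2⟩
  exact (stmt10_general θ (θ - ν) hx').comp
    (tendsto_atTop_add_const_left _ θ tendsto_natCast_atTop_atTop)
end
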